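/- Let A ∈ 𝓡 be a fixed set, X a random vector in [0,∞)^d whose distribution F belongs to MRV(α, V, μ) with α ∈ (0,∞) and μ(A) > 0, and Θ a nonnegative random variable not degenerate at 0. Suppose the pair (X, Θ) satisfies Assumption CD_A (with function h) and Assumption B_A, and E[Θ^p h(Θ)] < ∞ for some p > α. Then P[ΘX ∈ xA] ~ E[Θ^α h(Θ)]·P[X ∈ xA] as x → ∞, and the distribution G_A of M_A := sup{u > 0 : ΘX ∈ uA} is regularly varying of index −α. -/

import Mathlib

open MeasureTheory ProbabilityTheory Filter Topology
open scoped Pointwise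

namespace Paper

variable {d : ℕ} {Ω : Type*} [MeasurableSpace Ω]

/-- The family `𝓡` of open, increasing sets with convex complement, bounded away from `0`. -/
structure IsRSet (d : ℕ) (A : Set (Fin d → ℝ)) : Prop where
  isOpen : IsOpen A
  increasing : ∀ u ∈ A, ∀ v : Fin d → ℝ, (∀ i, 0 ≤ v i) → u + v ∈ A
  convex_compl : Convex ℝ Aᶜ
  zero_notMem_closure : (0 : Fin d → ℝ) ∉ closure A

/-- `Y_A(z) = sup { u > 0 : z ∈ u A }`. -/
noncomputable def suprA (A : Set (Fin d → ℝ)) (z : Fin d → ℝ) : ℝ :=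
  sSup {u : ℝ | 0 < u ∧ z ∈ u • A}

/-- `F_A`, the distribution of `Y_A = suprA A ∘ X` under `P`. -/
noncomputable def FA (P : Measure Ω) (A : Set (Fin d → ℝ)) (X : Ω → Fin d → ℝ) :
    Measure ℝ :=
  P.map (fun ω => suprA A (X ω))

/-- `F (x A) = P[X ∈ x A]` as a real number. -/
noncomputable def vTail (P : Measure Ω) (A : Set (Fin d → ℝ)) (X : Ω → Fin d → ℝ)
    (x : ℝ) : ℝ :=
  (P {ω | X ω ∈ x • A}).toReal

/-- Tail `ν(x, ∞)` of a measure on `ℝ`, as a real number. -/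
noncomputable def mTail (ν : Measure ℝ) (x : ℝ) : ℝ := (ν (Set.Ioi x)).toReal

/-- Convolution of two measures on `ℝ`. -/
noncomputable def mConv (μ ν : Measure ℝ) : Measure ℝ :=
  (μ.prod ν).map (fun p => p.1 + p.2)

/-- `n`-fold convolution power. -/
noncomputable def mConvN (ν : Measure ℝ) : ℕ → Measure ℝ
  | 0 => Measure.dirac 0
  | n + 1 => mConv (mConvN ν n) ν

/-- Long-tailed class `𝓛`. -/
def MemL (ν : Measure ℝ) : Prop :=
  ∀ a : ℝ, 0 < a → Tendsto (fun x => mTail ν (x - a) / mTail ν x) atTop (𝓝 1)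

/-- Subexponential class `𝓢`. -/
def MemS (ν : Measure ℝ) : Prop :=
  Tendsto (fun x => mTail (mConv ν ν) x / mTail ν x) atTop (𝓝 2)

/-- Dominatedly varying class `𝓓`. -/
def MemD (ν : Measure ℝ) : Prop :=
  ∀ y : ℝ, 0 < y → y < 1 → ∃ C : ℝ, ∀ᶠ x in atTop, mTail ν (y * x) / mTail ν x ≤ C

/-- Positively decreasing class `𝓟𝓓`. -/
def MemPD (ν : Measure ℝ) : Prop :=
  ∀ b : ℝ, 1 < b → ∃ c : ℝ, c < 1 ∧ ∀ᶠ x in atTop, mTail ν (b * x) / mTail ν x ≤ c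

/-- Consistently varying class `𝓒`. -/
def MemC (ν : Measure ℝ) : Prop :=
  Tendsto (fun b : ℝ => Filter.liminf (fun x => mTail ν (b * x) / mTail ν x) atTop)
    (nhdsWithin 1 (Set.Ioi 1)) (𝓝 1)

/-- `𝓐 = 𝓢 ∩ 𝓟𝓓`. -/
def MemA (ν : Measure ℝ) : Prop := MemS ν ∧ MemPD ν

/-- `𝓣 = 𝓛 ∩ 𝓟𝓓`. -/
def MemT (ν : Measure ℝ) : Prop := MemL ν ∧ MemPD ν

/-- Regular variation of index `-α` of the tail of `ν`. -/
def MemRV (ν : Measure ℝ) (α : ℝ) : Prop :=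
  ∀ t : ℝ, 0 < t → Tendsto (fun x => mTail ν (t * x) / mTail ν x) atTop (𝓝 (t ^ (-α)))

/-- Weak tail-equivalence `f ≍ g`. -/
def WeakTailEquiv (f g : ℝ → ℝ) : Prop :=
  ∃ c₁ c₂ : ℝ, 0 < c₁ ∧ ∀ᶠ x in atTop, c₁ * g x ≤ f x ∧ f x ≤ c₂ * g x

/-- (Standard) multivariate regular variation `F ∈ MRV(α, V, μ)` of the distribution of `X`. -/
structure IsMRV (P : Measure Ω) (X : Ω → Fin d → ℝ) (α : ℝ) (V : Measure ℝ)
    (μ : Measure (Fin d → ℝ)) : Prop where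
  alpha_pos : 0 < α
  V_prob : IsProbabilityMeasure V
  V_rv : MemRV V α
  mu_ne_zero : ∃ B : Set (Fin d → ℝ), (0 : Fin d → ℝ) ∉ closure B ∧ 0 < μ B
  mu_radon : ∀ B : Set (Fin d → ℝ), (0 : Fin d → ℝ) ∉ closure B → μ B ≠ ⊤
  tendsto : ∀ B : Set (Fin d → ℝ), MeasurableSet B → (0 : Fin d → ℝ) ∉ closure B →
    μ (frontier B) = 0 →
    Tendsto (fun x => vTail P B X x / mTail V x) atTop (𝓝 ((μ B).toReal))

/-- Support of a distribution on `ℝ`. -/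
def measSupport (ν : Measure ℝ) : Set ℝ := {t | ∀ U ∈ 𝓝 t, 0 < ν U}

/-- Assumption `CD_A`: conditional dependence of `(X, Θ)` on `A` with transfer function `h`:
`P[Y_A > x | Θ = t] ~ h(t) P[Y_A > x]` uniformly on the support of the distribution of `Θ`. -/
def CDA (P : Measure Ω) [IsFiniteMeasure P] (A : Set (Fin d → ℝ))
    (X : Ω → Fin d → ℝ) (Θ : Ω → ℝ) (h : ℝ → ℝ) : Prop :=
  ∀ ε : ℝ, 0 < ε → ∀ᶠ x in atTop, ∀ t ∈ measSupport (P.map Θ),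
    |((condDistrib (fun ω => suprA A (X ω)) Θ P) t (Set.Ioi x)).toReal /
        (h t * (P {ω | x < suprA A (X ω)}).toReal) - 1| ≤ ε

/-- Assumption `B_A`: `P[Θ > c x] = o(P[Θ Y_A > x])` for all `c > 0`. -/
def BA (P : Measure Ω) (A : Set (Fin d → ℝ)) (X : Ω → Fin d → ℝ) (Θ : Ω → ℝ) : Prop :=
  ∀ c : ℝ, 0 < c →
    Tendsto (fun x => (P {ω | c * x < Θ ω}).toReal /
      (P {ω | x < Θ ω * suprA A (X ω)}).toReal) atTop (𝓝 0)

/-- Assumption `B_A` in the form `P[Θ > c x] = o(P[Θ X ∈ x A])` for all `c > 0`. -/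
def BA' (P : Measure Ω) (A : Set (Fin d → ℝ)) (X : Ω → Fin d → ℝ) (Θ : Ω → ℝ) : Prop :=
  ∀ c : ℝ, 0 < c →
    Tendsto (fun x => (P {ω | c * x < Θ ω}).toReal /
      (P {ω | Θ ω • X ω ∈ x • A}).toReal) atTop (𝓝 0)

section Geo
variable {A : Set (Fin d → ℝ)}

lemma zero_mem_int (hA : IsRSet d A) : (0 : Fin d → ℝ) ∈ interior Aᶜ := by
  rw [interior_compl]; exact hA.zero_notMem_closure

lemma zero_notMem (hA : IsRSet d A) : (0 : Fin d → ℝ) ∉ A :=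
  fun h => hA.zero_notMem_closure (subset_closure h)

lemma smul_mem_of_one_le (hA : IsRSet d A) {z : Fin d → ℝ} (hz : z ∈ A) {s : ℝ} (hs : 1 ≤ s) :
    s • z ∈ A := by
  by_contra hc
  have h1 : s⁻¹ • (s • z) ∈ Aᶜ :=
    hA.convex_compl.smul_mem_of_zero_mem (zero_notMem hA) hc
      ⟨by positivity, inv_le_one_of_one_le₀ hs⟩
  rw [smul_smul, inv_mul_cancel₀ (by positivity), one_smul] at h1
  exact h1 hz

lemma smul_anti (hA : IsRSet d A) {u v : ℝ} (hu : 0 < u) (huv : u ≤ v) : v • A ⊆ u • A := by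
  rintro _ ⟨a, ha, rfl⟩
  refine ⟨(v / u) • a, smul_mem_of_one_le hA ha ((one_le_div hu).2 huv), ?_⟩
  simp only [smul_smul]
  rw [mul_div_cancel₀ _ hu.ne']

lemma exists_norm_bound (hA : IsRSet d A) : ∃ r : ℝ, 0 < r ∧ ∀ a ∈ closure A, r ≤ ‖a‖ := by
  have h := zero_mem_int hA
  rw [mem_interior_iff_mem_nhds, Metric.mem_nhds_iff] at h
  obtain ⟨r, hr, hsub⟩ := h
  refine ⟨r, hr, ?_⟩
  have : A ⊆ {a | r ≤ ‖a‖} := by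
    intro a ha
    by_contra hc
    exact hsub (by simpa using hc) ha
  exact closure_minimal this (isClosed_le continuous_const continuous_norm)

lemma bdd_set (hA : IsRSet d A) (z : Fin d → ℝ) : BddAbove {u : ℝ | 0 < u ∧ z ∈ u • A} := by
  obtain ⟨r, hr, hb⟩ := exists_norm_bound hA
  refine ⟨‖z‖ / r, ?_⟩
  rintro u ⟨hu, a, ha, rfl⟩
  have := hb a (subset_closure ha)
  rw [le_div_iff₀ hr]
  simp only [norm_smul, Real.norm_eq_abs, abs_of_pos hu]
  gcongr

lemma suprA_nonneg (z : Fin d → ℝ) : 0 ≤ suprA A z :=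
  Real.sSup_nonneg (fun _ hu => hu.1.le)

lemma lt_suprA_iff_exists (hA : IsRSet d A) (z : Fin d → ℝ) {x : ℝ} (hx : 0 ≤ x) :
    x < suprA A z ↔ ∃ u, x < u ∧ z ∈ u • A := by
  constructor
  · intro h
    have hne : {u : ℝ | 0 < u ∧ z ∈ u • A}.Nonempty := by
      by_contra hc
      rw [Set.not_nonempty_iff_eq_empty] at hc
      rw [suprA, hc, Real.sSup_empty] at h
      linarith
    obtain ⟨u, hu, hxu⟩ := exists_lt_of_lt_csSup hne h
    exact ⟨u, hxu, hu.2⟩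
  · rintro ⟨u, hxu, hu⟩
    have hu' : u ∈ {u : ℝ | 0 < u ∧ z ∈ u • A} := ⟨by linarith, hu⟩
    exact lt_of_lt_of_le hxu (le_csSup (bdd_set hA z) hu')

lemma lt_suprA_iff (hA : IsRSet d A) (z : Fin d → ℝ) {x : ℝ} (hx : 0 < x) :
    x < suprA A z ↔ z ∈ x • A := by
  rw [lt_suprA_iff_exists hA z hx.le]
  constructor
  · rintro ⟨u, hxu, hu⟩
    exact smul_anti hA hx hxu.le hu
  · intro hz
    rw [Set.mem_smul_set_iff_inv_smul_mem₀ hx.ne'] at hz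
    have hc : ContinuousAt (fun u : ℝ => u⁻¹ • z) x :=
      (continuousAt_inv₀ hx.ne').smul continuousAt_const
    have h1 : ∀ᶠ u in 𝓝 x, u⁻¹ • z ∈ A := hc.eventually (hA.isOpen.mem_nhds hz)
    obtain ⟨u, hu, hxu⟩ := ((h1.filter_mono nhdsWithin_le_nhds).and
      (self_mem_nhdsWithin : Set.Ioi x ∈ 𝓝[>] x)).exists
    have hxu' : x < u := hxu
    exact ⟨u, hxu, (Set.mem_smul_set_iff_inv_smul_mem₀ (by linarith : (0:ℝ) < u).ne' _ _).2 hu⟩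

lemma suprA_smul (hA : IsRSet d A) (z : Fin d → ℝ) {t : ℝ} (ht : 0 ≤ t) :
    suprA A (t • z) = t * suprA A z := by
  have key : ∀ x, 0 < x → (x < suprA A (t • z) ↔ x < t * suprA A z) := by
    intro x hx
    rw [lt_suprA_iff hA _ hx]
    rcases ht.eq_or_lt with rfl | ht
    · simp only [zero_smul, zero_mul, not_lt.2 hx.le, iff_false]
      rw [Set.mem_smul_set_iff_inv_smul_mem₀ hx.ne', smul_zero]
      exact zero_notMem hA
    · rw [← div_lt_iff₀' ht, lt_suprA_iff hA _ (by positivity),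
        Set.mem_smul_set_iff_inv_smul_mem₀ hx.ne',
        Set.mem_smul_set_iff_inv_smul_mem₀ (by positivity), smul_smul, inv_div]
      rw [div_eq_inv_mul]
  have h1 := suprA_nonneg (A := A) (t • z)
  have h2 := mul_nonneg ht (suprA_nonneg (A := A) z)
  apply le_antisymm
  · by_contra hc
    push Not at hc
    obtain ⟨x, hx1, hx2⟩ := exists_between hc
    exact absurd ((key x (by linarith)).1 hx2) (by linarith)
  · by_contra hc
    push Not at hc
    obtain ⟨x, hx1, hx2⟩ := exists_between hc
    exact absurd ((key x (by linarith)).2 hx2) (by linarith)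

lemma measurable_suprA (hA : IsRSet d A) : Measurable (suprA A) := by
  refine measurable_of_Ioi fun x => ?_
  rcases lt_or_ge x 0 with hx | hx
  · have : suprA A ⁻¹' Set.Ioi x = Set.univ := by
      ext z
      simp only [Set.mem_preimage, Set.mem_Ioi, Set.mem_univ, iff_true]
      exact lt_of_lt_of_le hx (suprA_nonneg z)
    rw [this]; exact MeasurableSet.univ
  · have : suprA A ⁻¹' Set.Ioi x = ⋃ u ∈ Set.Ioi x, u • A := by
      ext z
      simp only [Set.mem_preimage, Set.mem_Ioi, Set.mem_iUnion, exists_prop]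
      exact lt_suprA_iff_exists hA z hx
    rw [this]
    refine (isOpen_biUnion fun u hu => ?_).measurableSet
    exact hA.isOpen.smul₀ (lt_of_le_of_lt hx hu).ne'

lemma exists_good (hA : IsRSet d A) (μ : Measure (Fin d → ℝ))
    (hμ : ∀ B : Set (Fin d → ℝ), (0 : Fin d → ℝ) ∉ closure B → μ B ≠ ⊤) :
    ∃ c : ℝ, 0 < c ∧ c < 1 ∧ μ (frontier (c • A)) = 0 := by
  obtain ⟨r, hr, hb⟩ := exists_norm_bound hA
  have hdisj : ∀ c c' : ℝ, 0 < c → c < c' →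
      Disjoint (frontier (c • A)) (frontier (c' • A)) := by
    intro c c' hc hcc
    rw [Set.disjoint_left]
    intro z hz hz'
    have hc' : 0 < c' := hc.trans hcc
    have h1 : c'⁻¹ • z ∈ closure A := by
      have := frontier_subset_closure hz'
      rwa [closure_smul₀' hc'.ne', Set.mem_smul_set_iff_inv_smul_mem₀ hc'.ne'] at this
    have h2 : c⁻¹ • z ∈ Aᶜ := by
      rw [(hA.isOpen.smul₀ hc.ne').frontier_eq] at hz
      intro h
      exact hz.2 ((Set.mem_smul_set_iff_inv_smul_mem₀ hc.ne' _ _).2 h)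
    have h3 := hA.convex_compl.combo_interior_self_mem_interior (zero_mem_int hA) h2
      (a := 1 - c / c') (b := c / c') (by rw [sub_pos, div_lt_one hc']; exact hcc)
      (by positivity) (by ring)
    rw [smul_zero, zero_add, smul_smul, interior_compl] at h3
    apply h3
    convert h1 using 2
    field_simp
  let As : Set.Ioo (1/2 : ℝ) 1 → Set (Fin d → ℝ) := fun c => frontier ((c : ℝ) • A)
  have hcount := Measure.countable_meas_pos_of_disjoint_of_meas_iUnion_ne_top μ
    (As := As) (fun c => isClosed_frontier.measurableSet) (by
      intro c c' hne
      have hc := c.2.1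
      have hc' := c'.2.1
      rcases lt_or_gt_of_ne (Subtype.coe_injective.ne hne) with hl | hl
      · exact hdisj _ _ (by linarith) hl
      · exact (hdisj _ _ (by linarith) hl).symm) (by
      apply ne_top_of_le_ne_top (hμ {z | r / 2 ≤ ‖z‖} ?_) (measure_mono ?_)
      · rw [(isClosed_le continuous_const continuous_norm).closure_eq]
        simp only [Set.mem_ofPred_eq, norm_zero, not_le]
        linarith
      · refine Set.iUnion_subset fun c z hz => ?_
        have hc := c.2.1
        have hc0 : (0:ℝ) < c := by linarith
        have := frontier_subset_closure hz
        rw [closure_smul₀' hc0.ne'] at this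
        obtain ⟨a, ha, rfl⟩ := this
        have := hb a ha
        simp only [Set.mem_ofPred_eq, norm_smul, Real.norm_eq_abs, abs_of_pos hc0]
        nlinarith)
  by_contra hcon
  push Not at hcon
  have huniv : {i | 0 < μ (As i)} = Set.univ := by
    ext c
    simp only [Set.mem_ofPred_eq, Set.mem_univ, iff_true]
    have hc := c.2.1
    exact pos_iff_ne_zero.2 (hcon c (by linarith) c.2.2)
  rw [huniv] at hcount
  have h2 : (Set.Ioo (1/2 : ℝ) 1).Countable := by
    have := hcount.image (Subtype.val)
    rwa [Set.image_univ, Subtype.range_coe] at this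
  have h3 := h2.measure_zero volume
  rw [Real.volume_Ioo] at h3
  norm_num at h3
end Geo

section Ana

lemma rv_ne_zero {g : ℝ → ℝ} {α : ℝ}
    (hg : ∀ t : ℝ, 0 < t → Tendsto (fun x => g (t * x) / g x) atTop (𝓝 (t ^ (-α)))) :
    ∀ᶠ x in atTop, g x ≠ 0 := by
  have h1 := hg 1 one_pos
  rw [Real.one_rpow] at h1
  filter_upwards [h1.eventually_ne one_ne_zero] with x hx h0
  simp [h0] at hx

lemma rv_of_equiv {f g : ℝ → ℝ} {α K : ℝ} (hK : K ≠ 0)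
    (hfg : Tendsto (fun x => f x / g x) atTop (𝓝 K))
    (hg : ∀ t : ℝ, 0 < t → Tendsto (fun x => g (t * x) / g x) atTop (𝓝 (t ^ (-α)))) :
    ∀ t : ℝ, 0 < t → Tendsto (fun x => f (t * x) / f x) atTop (𝓝 (t ^ (-α))) := by
  intro t ht
  have htx : Tendsto (fun x : ℝ => t * x) atTop atTop := tendsto_id.const_mul_atTop ht
  have h := ((hfg.comp htx).mul (hg t ht)).mul (hfg.inv₀ hK)
  rw [mul_comm K, mul_assoc, mul_inv_cancel₀ hK, mul_one] at h
  refine h.congr' ?_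
  filter_upwards [rv_ne_zero hg, htx.eventually (rv_ne_zero hg)] with x h1 h2
  simp only [Function.comp]
  field_simp

lemma potter {T : ℝ → ℝ} {α p : ℝ} (hmono : Antitone T) (h0 : ∀ x, 0 < T x)
    (hT : ∀ t : ℝ, 0 < t → Tendsto (fun x => T (t * x) / T x) atTop (𝓝 (t ^ (-α))))
    (hp : α < p) (hp0 : 0 < p) :
    ∃ D : ℝ, 0 < D ∧ ∀ y, D ≤ y → ∀ t, 1 ≤ t → T y ≤ (2 : ℝ) ^ p * t ^ p * T (t * y) := by
  have h2 := hT 2 two_pos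
  have hlt : (2 : ℝ) ^ (-p) < 2 ^ (-α) :=
    Real.rpow_lt_rpow_of_exponent_lt one_lt_two (by linarith)
  obtain ⟨D, hD⟩ := eventually_atTop.1 ((h2.eventually_const_lt hlt).and (eventually_gt_atTop 0))
  have hD0 : 0 < D := (hD D le_rfl).2
  refine ⟨D, hD0, ?_⟩
  have step : ∀ y, D ≤ y → T y ≤ (2:ℝ) ^ p * T (2 * y) := by
    intro y hy
    have := (hD y hy).1
    rw [lt_div_iff₀ (h0 y), Real.rpow_neg zero_le_two, inv_mul_lt_iff₀ (by positivity)] at this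
    exact this.le
  have iter : ∀ n : ℕ, ∀ y, D ≤ y → T y ≤ ((2:ℝ) ^ n) ^ p * T (2 ^ n * y) := by
    intro n
    induction n with
    | zero => intro y hy; simp
    | succ n ih =>
      intro y hy
      have hy0 : 0 < y := hD0.trans_le hy
      have h1 : (1:ℝ) ≤ 2 ^ n := one_le_pow₀ one_le_two
      have h3 := step (2 ^ n * y) (by nlinarith)
      have hpow : ((2:ℝ) ^ (n+1)) ^ p = (2 ^ n) ^ p * 2 ^ p := by
        rw [pow_succ, Real.mul_rpow (by positivity) (by positivity)]
      have harg : (2:ℝ) ^ (n+1) * y = 2 * (2 ^ n * y) := by ring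
      rw [hpow, harg, mul_assoc]
      exact (ih y hy).trans (mul_le_mul_of_nonneg_left h3 (by positivity))
  intro y hy t ht
  have hy0 : 0 < y := hD0.trans_le hy
  obtain ⟨n, hn1, hn2⟩ := exists_nat_pow_near ht one_lt_two
  calc T y ≤ ((2:ℝ) ^ (n+1)) ^ p * T (2 ^ (n+1) * y) := iter _ _ hy
    _ ≤ (2 * t) ^ p * T (t * y) := by
        have e1 : ((2:ℝ) ^ (n+1)) ^ p ≤ (2 * t) ^ p := by
          apply Real.rpow_le_rpow (by positivity) _ hp0.le
          rw [pow_succ]; linarith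
        have e2 : T (2 ^ (n+1) * y) ≤ T (t * y) := hmono (by gcongr)
        exact mul_le_mul e1 e2 (h0 _).le (by positivity)
    _ = _ := by rw [Real.mul_rpow (by positivity) (by positivity)]

lemma rv_pos {T : ℝ → ℝ} {α : ℝ} (hmono : Antitone T) (h0 : ∀ x, 0 ≤ T x)
    (hT : ∀ t : ℝ, 0 < t → Tendsto (fun x => T (t * x) / T x) atTop (𝓝 (t ^ (-α)))) :
    ∀ x, 0 < T x := by
  intro x
  obtain ⟨y, hy, hxy⟩ := ((rv_ne_zero hT).and (eventually_ge_atTop x)).exists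
  exact ((h0 y).lt_of_ne' hy).trans_le (hmono hxy)

/-- Univariate dependent Breiman lemma. -/
lemma breiman (P : Measure Ω) [IsProbabilityMeasure P] (Y Θ : Ω → ℝ) (hY : Measurable Y)
    (hΘ : Measurable Θ) (hΘ0 : ∀ ω, 0 ≤ Θ ω) (hY0 : ∀ ω, 0 ≤ Y ω)
    (hΘnd : 0 < P {ω | 0 < Θ ω})
    (h : ℝ → ℝ) (hh : Measurable h) (hhpos : ∀ t, 0 < h t)
    (α p : ℝ) (hα : 0 < α) (hp : α < p)
    (T : ℝ → ℝ) (hTdef : T = fun x => (P {ω | x < Y ω}).toReal)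
    (hT : ∀ t : ℝ, 0 < t → Tendsto (fun x => T (t * x) / T x) atTop (𝓝 (t ^ (-α))))
    (hCD : ∀ ε : ℝ, 0 < ε → ∀ᶠ x in atTop, ∀ t ∈ measSupport (P.map Θ),
      |((condDistrib Y Θ P) t (Set.Ioi x)).toReal / (h t * T x) - 1| ≤ ε)
    (hB : ∀ c : ℝ, 0 < c → Tendsto (fun x => (P {ω | c * x < Θ ω}).toReal /
      (P {ω | x < Θ ω * Y ω}).toReal) atTop (𝓝 0))
    (hmom : Integrable (fun ω => Θ ω ^ p * h (Θ ω)) P) :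
    0 < (∫ ω, Θ ω ^ α * h (Θ ω) ∂P) ∧
    Tendsto (fun x => (P {ω | x < Θ ω * Y ω}).toReal / T x) atTop
      (𝓝 (∫ ω, Θ ω ^ α * h (Θ ω) ∂P)) := by
  have hp0 : 0 < p := hα.trans hp
  have hTmono : Antitone T := by
    intro x y hxy
    rw [hTdef]
    exact measureReal_mono (fun ω (hω : y < Y ω) => lt_of_le_of_lt hxy hω)
  have hT0 : ∀ x, 0 < T x := rv_pos hTmono (by intro x; rw [hTdef]; positivity) hT
  obtain ⟨D₁, hD₁, hpot⟩ := potter hTmono hT0 hT hp hp0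
  set ν := P.map Θ with hν
  set κ := condDistrib Y Θ P with hκ
  have : IsProbabilityMeasure ν := Measure.isProbabilityMeasure_map hΘ.aemeasurable
  have hsupp : ∀ᵐ t ∂ν, t ∈ measSupport ν := by
    filter_upwards [Measure.support_mem_ae (μ := ν)] with t ht
    exact (Measure.mem_support_iff_forall t).1 ht
  have hnn : ∀ᵐ t ∂ν, 0 ≤ t := by
    rw [hν, ae_map_iff hΘ.aemeasurable measurableSet_Ici]
    exact ae_of_all _ hΘ0
  obtain ⟨D₂, hD₂⟩ := eventually_atTop.1 (hCD (1/2) (by norm_num))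
  set D := max D₁ D₂ with hDdef
  have hD0 : 0 < D := lt_max_of_lt_left hD₁
  have hup : ∀ t ∈ measSupport ν, ∀ x, D ≤ x → (κ t (Set.Ioi x)).toReal ≤ 2 * (h t * T x) := by
    intro t ht x hx
    have h1 := (abs_le.1 (hD₂ x ((le_max_right _ _).trans hx) t ht)).2
    have h2 : 0 < h t * T x := mul_pos (hhpos t) (hT0 x)
    have h3 : (κ t (Set.Ioi x)).toReal / (h t * T x) ≤ 2 := by linarith
    rwa [div_le_iff₀ h2] at h3
  have hbdd : ∀ t ∈ measSupport ν, h t ≤ 2 / T D := by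
    intro t ht
    have h1 := (abs_le.1 (hD₂ D (le_max_right _ _) t ht)).1
    have h2 : 0 < h t * T D := mul_pos (hhpos t) (hT0 D)
    have h3 : (1/2 : ℝ) ≤ (κ t (Set.Ioi D)).toReal / (h t * T D) := by linarith
    rw [le_div_iff₀ h2] at h3
    have h4 : (κ t (Set.Ioi D)).toReal ≤ 1 := measureReal_le_one
    rw [le_div_iff₀ (hT0 D)]
    linarith
  -- integrability
  have hmomν : Integrable (fun t => t ^ p * h t) ν := by
    rw [hν, integrable_map_measure (by fun_prop) hΘ.aemeasurable]
    exact hmom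
  set bd : ℝ → ℝ := fun t => 2 * (2 / T D) + 2 * 2 ^ p * (t ^ p * h t) with hbd
  have hbdint : Integrable bd ν := (integrable_const _).add (hmomν.const_mul _)
  have h2p : (1:ℝ) ≤ 2 ^ p := Real.one_le_rpow one_le_two hp0.le
  have hIα : Integrable (fun t => t ^ α * h t) ν := by
    refine hbdint.mono' (by fun_prop) ?_
    filter_upwards [hsupp, hnn] with t ht ht0
    have hht := hhpos t
    rw [Real.norm_of_nonneg (by positivity)]
    have hTD := hT0 D
    have hb := hbdd t ht
    have hq : 0 ≤ t ^ p * h t := by positivity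
    rcases le_total t 1 with h1 | h1
    · have : t ^ α ≤ 1 := Real.rpow_le_one ht0 h1 hα.le
      have : t ^ α * h t ≤ 1 * h t := by gcongr
      have : 0 ≤ 2 * 2 ^ p * (t ^ p * h t) := by positivity
      simp only [hbd]; linarith
    · have : t ^ α ≤ t ^ p := Real.rpow_le_rpow_of_exponent_le h1 hp.le
      have : t ^ α * h t ≤ t ^ p * h t := by gcongr
      have : 0 ≤ 2 / T D := by positivity
      simp only [hbd]; nlinarith
  have hIeq : ∫ t, t ^ α * h t ∂ν = ∫ ω, Θ ω ^ α * h (Θ ω) ∂P := by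
    rw [hν, integral_map hΘ.aemeasurable (by fun_prop)]
  have hIαP : Integrable (fun ω => Θ ω ^ α * h (Θ ω)) P :=
    hIα.comp_measurable hΘ
  have hEpos : 0 < ∫ ω, Θ ω ^ α * h (Θ ω) ∂P := by
    rw [integral_pos_iff_support_of_nonneg _ hIαP]
    · refine hΘnd.trans_le (measure_mono fun ω (hω : 0 < Θ ω) => ?_)
      have := hhpos (Θ ω)
      rw [Function.mem_support]; positivity
    · intro ω
      have := hhpos (Θ ω)
      have := hΘ0 ω
      simp only [Pi.zero_apply]; positivity
  refine ⟨hEpos, ?_⟩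
  set E := ∫ ω, Θ ω ^ α * h (Θ ω) ∂P with hE
  -- truncated part
  let S : ℝ → Set (ℝ × ℝ) := fun x => {q | x < q.1 * q.2 ∧ q.1 ≤ x / D}
  have hSm : ∀ x, MeasurableSet (S x) := fun x =>
    (measurableSet_lt measurable_const (measurable_fst.mul measurable_snd)).inter
      (measurableSet_le measurable_fst measurable_const)
  let F : ℝ → ℝ → ℝ := fun x t => (κ t (Prod.mk t ⁻¹' S x)).toReal / T x
  let N : ℝ → ℝ := fun x => (P {ω | x < Θ ω * Y ω ∧ Θ ω ≤ x / D}).toReal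
  have hN : ∀ x, N x / T x = ∫ t, F x t ∂ν := by
    intro x
    have e1 : P {ω | x < Θ ω * Y ω ∧ Θ ω ≤ x / D} = ∫⁻ t, κ t (Prod.mk t ⁻¹' S x) ∂ν := by
      rw [← Measure.compProd_apply (hSm x), hν, hκ,
        compProd_map_condDistrib hY.aemeasurable, Measure.map_apply (hΘ.prodMk hY) (hSm x)]
      rfl
    simp only [N, F]
    rw [integral_div, integral_toReal, ← e1]
    · exact (Kernel.measurable_kernel_prodMk_left (hSm x)).aemeasurable
    · exact ae_of_all _ fun t => measure_lt_top _ _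
  have hpre : ∀ x t : ℝ, 0 < t → t ≤ x / D → Prod.mk t ⁻¹' S x = Set.Ioi (x / t) := by
    intro x t ht htx
    ext y
    simp only [S, Set.mem_preimage, Set.mem_ofPred_eq, Set.mem_Ioi, htx, and_true]
    rw [div_lt_iff₀' ht]
  have hpre0 : ∀ x t : ℝ, 0 < x → ¬ (0 < t ∧ t ≤ x / D) → 0 ≤ t → Prod.mk t ⁻¹' S x = ∅ := by
    intro x t hx ht ht0
    ext y
    simp only [S, Set.mem_preimage, Set.mem_ofPred_eq, Set.mem_empty_iff_false, iff_false]
    rintro ⟨h1, h2⟩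
    apply ht
    refine ⟨ht0.lt_of_ne' ?_, h2⟩
    rintro rfl
    simp at h1; linarith
  have hlim : Tendsto (fun x => ∫ t, F x t ∂ν) atTop (𝓝 (∫ t, t ^ α * h t ∂ν)) := by
    refine tendsto_integral_filter_of_dominated_convergence bd ?_ ?_ hbdint ?_
    · refine Eventually.of_forall fun x => ?_
      exact ((Kernel.measurable_kernel_prodMk_left (hSm x)).ennreal_toReal.div_const
        _).aestronglyMeasurable
    · filter_upwards [eventually_gt_atTop 0] with x hx
      filter_upwards [hsupp, hnn] with t ht ht0
      have hht := hhpos t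
      have hTD := hT0 D
      have hTx := hT0 x
      have hb := hbdd t ht
      have hq : 0 ≤ t ^ p * h t := by positivity
      have hF0 : 0 ≤ F x t := by simp only [F]; positivity
      rw [Real.norm_of_nonneg hF0]
      by_cases hc : 0 < t ∧ t ≤ x / D
      · obtain ⟨htp, htx⟩ := hc
        have hDx : D ≤ x / t := by
          rw [le_div_iff₀ hD0] at htx
          rw [le_div_iff₀ htp]; linarith
        simp only [F]
        rw [hpre x t htp htx, div_le_iff₀ hTx]
        refine (hup t ht _ hDx).trans ?_
        rcases le_total t 1 with h1 | h1
        · have e1 : T (x / t) ≤ T x := hTmono (by rw [le_div_iff₀ htp]; nlinarith)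
          have e2 : h t * T (x / t) ≤ (2 / T D) * T x :=
            mul_le_mul hb e1 (hT0 _).le (by positivity)
          have e3 : 0 ≤ 2 * 2 ^ p * (t ^ p * h t) * T x := by positivity
          simp only [hbd]; linarith
        · have e1 := hpot (x / t) ((le_max_left _ _).trans hDx) t h1
          rw [mul_div_cancel₀ _ htp.ne'] at e1
          have e2 : h t * T (x / t) ≤ h t * (2 ^ p * t ^ p * T x) := by gcongr
          have e3 : 0 ≤ 2 * (2 / T D) * T x := by positivity
          simp only [hbd]; linarith
      · simp only [F]
        rw [hpre0 x t hx hc ht0]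
        simp only [measure_empty, ENNReal.toReal_zero, zero_div, hbd]
        positivity
    · filter_upwards [hsupp, hnn] with t ht ht0
      rcases ht0.eq_or_lt with rfl | htp
      · rw [Real.zero_rpow hα.ne', zero_mul]
        refine tendsto_const_nhds.congr' ?_
        filter_upwards [eventually_gt_atTop 0] with x hx
        simp only [F]
        rw [hpre0 x 0 hx (by simp) le_rfl]; simp
      · have hxt : Tendsto (fun x : ℝ => x / t) atTop atTop := tendsto_id.atTop_div_const htp
        have l1 : Tendsto (fun x => (κ t (Set.Ioi x)).toReal / (h t * T x)) atTop (𝓝 1) := by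
          rw [Metric.tendsto_nhds]
          intro ε hε
          filter_upwards [hCD (ε/2) (by positivity)] with x hx
          rw [Real.dist_eq]
          linarith [hx t ht]
        have l2 := hT t⁻¹ (by positivity)
        rw [Real.inv_rpow ht0, Real.rpow_neg ht0, inv_inv] at l2
        have l3 := ((l1.comp hxt).mul l2).mul_const (h t)
        rw [one_mul] at l3
        refine l3.congr' ?_
        filter_upwards [eventually_ge_atTop (t * D)] with x hx
        simp only [F, Function.comp]
        rw [hpre x t htp (by rw [le_div_iff₀ hD0]; exact hx), ← div_eq_inv_mul]
        have a1 := (hhpos t).ne'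
        have a2 := (hT0 x).ne'
        have a3 := (hT0 (x / t)).ne'
        field_simp
  have hNT : Tendsto (fun x => N x / T x) atTop (𝓝 E) := by
    simp only [hN]; rw [← hIeq]; exact hlim
  set G : ℝ → ℝ := fun x => (P {ω | x < Θ ω * Y ω}).toReal with hG
  have hNG : ∀ x, N x ≤ G x := fun x => measureReal_mono (fun ω hω => hω.1)
  have hGpos : ∀ᶠ x in atTop, 0 < G x := by
    filter_upwards [hNT.eventually_const_lt hEpos] with x hx
    have : 0 < N x := by
      by_contra hc
      exact absurd hx (not_lt.2 (div_nonpos_of_nonpos_of_nonneg (not_lt.1 hc) (hT0 x).le))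
    exact this.trans_le (hNG x)
  have hR : ∀ x, G x ≤ N x + (P {ω | D⁻¹ * x < Θ ω}).toReal := by
    intro x
    refine (measureReal_mono (μ := P) (s₂ := {ω | x < Θ ω * Y ω ∧ Θ ω ≤ x / D} ∪ {ω | D⁻¹ * x < Θ ω})
      (fun ω (hω : x < Θ ω * Y ω) => ?_)).trans (measureReal_union_le _ _)
    rcases le_or_gt (Θ ω) (x / D) with h1 | h1
    · exact Or.inl ⟨hω, h1⟩
    · refine Or.inr ?_
      rw [div_eq_inv_mul] at h1; exact h1
  have hratio : Tendsto (fun x => N x / G x) atTop (𝓝 1) := by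
    have hb := hB D⁻¹ (by positivity)
    have hb' := hb.const_sub 1
    rw [sub_zero] at hb'
    refine tendsto_of_tendsto_of_tendsto_of_le_of_le' hb' tendsto_const_nhds ?_ ?_
    · filter_upwards [hGpos] with x hx
      have := hR x
      rw [sub_le_iff_le_add, ← add_div, le_div_iff₀ hx]
      linarith
    · filter_upwards [hGpos] with x hx
      rw [div_le_one hx]; exact hNG x
  have hfin := hNT.div hratio one_ne_zero
  rw [div_one] at hfin
  refine hfin.congr' ?_
  filter_upwards [hGpos, hratio.eventually_ne one_ne_zero] with x hx hx2
  have a1 := hx.ne'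
  have a2 := (hT0 x).ne'
  have a3 : N x ≠ 0 := by
    intro h0; rw [h0, zero_div] at hx2; exact hx2 rfl
  change N x / T x / (N x / G x) = G x / T x
  field_simp
end Ana

/-- Dependent multivariate Breiman lemma: if `F ∈ MRV(α, V, μ)`,
`(X, Θ)` satisfies `CD_A` (with function `h`) and `B_A`, and `E[Θ^p h(Θ)] < ∞` for
some `p > α`, then `P[ΘX ∈ xA] ~ E[Θ^α h(Θ)] · P[X ∈ xA]` and `G_A ∈ 𝓡_{-α}`. -/
theorem statement10 (P : Measure Ω) [IsProbabilityMeasure P]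
    (A : Set (Fin d → ℝ)) (hA : IsRSet d A)
    (X : Ω → Fin d → ℝ) (hX : Measurable X)
    (α : ℝ) (V : Measure ℝ) (μ : Measure (Fin d → ℝ))
    (hMRV : IsMRV P X α V μ) (hμA : 0 < μ A)
    (Θ : Ω → ℝ) (hΘ : Measurable Θ) (hΘ0 : ∀ ω, 0 ≤ Θ ω)
    (hΘnd : 0 < P {ω | 0 < Θ ω})
    (h : ℝ → ℝ) (hh : Measurable h) (hhpos : ∀ t, 0 < h t)
    (hCD : CDA P A X Θ h) (hB : BA P A X Θ)
    (p : ℝ) (hp : α < p)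
    (hmom : Integrable (fun ω => Θ ω ^ p * h (Θ ω)) P) :
    Tendsto (fun x => (P {ω | Θ ω • X ω ∈ x • A}).toReal /
        ((∫ ω, Θ ω ^ α * h (Θ ω) ∂P) * vTail P A X x)) atTop (𝓝 1) ∧
      MemRV (FA P A fun ω => Θ ω • X ω) α := by
  classical
  have hα := hMRV.alpha_pos
  obtain ⟨c, hc0, hc1, hcf⟩ := exists_good hA μ hMRV.mu_radon
  have hcl : (0 : Fin d → ℝ) ∉ closure (c • A) := by
    rw [closure_smul₀' hc0.ne', Set.mem_smul_set_iff_inv_smul_mem₀ hc0.ne', smul_zero]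
    exact hA.zero_notMem_closure
  have hlim := hMRV.tendsto (c • A) (hA.isOpen.smul₀ hc0.ne').measurableSet hcl hcf
  have hVrv : ∀ t : ℝ, 0 < t →
      Tendsto (fun x => mTail V (t * x) / mTail V x) atTop (𝓝 (t ^ (-α))) := hMRV.V_rv
  have hKpos : 0 < (μ (c • A)).toReal := by
    refine ENNReal.toReal_pos ?_ (hMRV.mu_radon _ hcl)
    have hsub : A ⊆ c • A := by
      have := smul_anti hA hc0 hc1.le
      rwa [one_smul] at this
    exact (hμA.trans_le (measure_mono hsub)).ne'
  have hciA : Tendsto (fun x : ℝ => c⁻¹ * x) atTop atTop :=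
    tendsto_id.const_mul_atTop (by positivity)
  have hvV : Tendsto (fun x => vTail P A X x / mTail V x) atTop
      (𝓝 ((μ (c • A)).toReal * c⁻¹ ^ (-α))) := by
    have h1 := (hlim.comp hciA).mul (hVrv c⁻¹ (by positivity))
    refine h1.congr' ?_
    filter_upwards [hciA.eventually (rv_ne_zero hVrv)] with x hx
    have hv : vTail P (c • A) X (c⁻¹ * x) = vTail P A X x := by
      simp only [vTail]
      rw [smul_smul, mul_comm c⁻¹ x, mul_assoc, inv_mul_cancel₀ hc0.ne', mul_one]
    simp only [Function.comp, hv]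
    exact div_mul_div_cancel₀ hx
  have hvrv := rv_of_equiv (mul_pos hKpos (by positivity)).ne' hvV hVrv
  set Y : Ω → ℝ := fun ω => suprA A (X ω) with hYdef
  have hY : Measurable Y := (measurable_suprA hA).comp hX
  set T : ℝ → ℝ := fun x => (P {ω | x < Y ω}).toReal with hTdef
  have hTv : ∀ x, 0 < x → T x = vTail P A X x := by
    intro x hx
    simp only [hTdef, vTail, hYdef, lt_suprA_iff hA _ hx]
  have hTrv : ∀ t : ℝ, 0 < t → Tendsto (fun x => T (t * x) / T x) atTop (𝓝 (t ^ (-α))) := by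
    intro t ht
    refine (hvrv t ht).congr' ?_
    filter_upwards [eventually_gt_atTop 0] with x hx
    rw [hTv x hx, hTv (t * x) (by positivity)]
  obtain ⟨hE, hbr⟩ := breiman P Y Θ hY hΘ hΘ0 (fun ω => suprA_nonneg _) hΘnd h hh hhpos α p hα hp
    T hTdef hTrv hCD hB hmom
  have hTne := rv_ne_zero hTrv
  constructor
  · have h1 := hbr.div_const (∫ ω, Θ ω ^ α * h (Θ ω) ∂P)
    rw [div_self hE.ne'] at h1
    refine h1.congr' ?_
    filter_upwards [eventually_gt_atTop 0] with x hx
    have hset : {ω | Θ ω • X ω ∈ x • A} = {ω | x < Θ ω * Y ω} := by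
      ext ω
      change Θ ω • X ω ∈ x • A ↔ x < Θ ω * suprA A (X ω)
      rw [← suprA_smul hA _ (hΘ0 ω), lt_suprA_iff hA _ hx]
    rw [hset, ← hTv x hx, div_div, mul_comm (T x)]
  · have hm : mTail (FA P A fun ω => Θ ω • X ω) = fun x => (P {ω | x < Θ ω * Y ω}).toReal := by
      funext x
      have hmeas : Measurable (fun ω => suprA A (Θ ω • X ω)) :=
        (measurable_suprA hA).comp (hΘ.smul hX)
      simp only [mTail, FA]
      rw [Measure.map_apply hmeas measurableSet_Ioi]
      congr 2
      ext ω
      change x < suprA A (Θ ω • X ω) ↔ x < Θ ω * suprA A (X ω)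
      rw [suprA_smul hA _ (hΘ0 ω)]
    have := rv_of_equiv hE.ne' hbr hTrv
    unfold MemRV
    rw [hm]
    exact this

end Paper
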